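/- Let 𝓕 be a family of tournaments, let G be an n-vertex graph that is 𝓕-extremal (i.e., D(G,𝓕) = max{D(G',𝓕) : G' has n vertices}), and let S ⊆ V(G) be a non-empty independent set. Set H = G − S. Then for any two vertices u, w ∈ S, the vectors u⃗_{H,𝓕} and w⃗_{H,𝓕} are equal; that is, c_𝓕(u, H⃗) = c_𝓕(w, H⃗) for every 𝓕-free orientation H⃗ of H. -/

import Mathlib

open scoped Classical

noncomputable section

universe u

variable {V : Type u}

/-- An orientation of a simple graph `G`: a relation choosing exactly one
direction for each edge of `G`. -/
abbrev SimpleGraph.Orient (G : SimpleGraph V) : Type u :=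
  {D : V → V → Prop // (∀ u v, D u v → G.Adj u v) ∧ ∀ u v, G.Adj u v → (D u v ↔ ¬ D v u)}

/-- A family of tournaments: for each `k`, a set of orientations of the
complete graph on `k` vertices. -/
abbrev TournFamily : Type :=
  ∀ k : ℕ, Set ((⊤ : SimpleGraph (Fin k)).Orient)

/-- The orientation `D` of `G` contains a copy of the `k`-vertex tournament `T`. -/
def ContainsCopy {G : SimpleGraph V} (D : G.Orient) {k : ℕ}
    (T : (⊤ : SimpleGraph (Fin k)).Orient) : Prop :=
  ∃ φ : Fin k → V, Function.Injective φ ∧ ∀ i j, T.1 i j → D.1 (φ i) (φ j)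

/-- The orientation `D` is `F`-free: it contains no copy of a member of `F`. -/
def FreeOrient {G : SimpleGraph V} (F : TournFamily) (D : G.Orient) : Prop :=
  ∀ (k : ℕ) (T : (⊤ : SimpleGraph (Fin k)).Orient), T ∈ F k → ¬ ContainsCopy D T

/-- `D(G, F)`: the number of `F`-free orientations of the graph `G`. -/
def numOrient (G : SimpleGraph V) (F : TournFamily) : ℕ :=
  Nat.card {D : G.Orient // FreeOrient F D}

/-- `D(n, F)`: the maximum of `D(G, F)` over all `n`-vertex graphs `G`. -/
def maxOrient (n : ℕ) (F : TournFamily) : ℕ :=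
  sSup (Set.range fun G : SimpleGraph (Fin n) => numOrient G F)

/-- A tournament is strongly connected if there is a directed path between
every ordered pair of vertices. -/
def IsStrongTourn {k : ℕ} (T : (⊤ : SimpleGraph (Fin k)).Orient) : Prop :=
  ∀ u v : Fin k, Relation.ReflTransGen T.1 u v

/-- `𝓢 k`: the family of strongly connected tournaments on `k` vertices. -/
def SFam (k : ℕ) : TournFamily := fun m => {T | m = k ∧ IsStrongTourn T}

/-- `t r n`: the number of edges of the `r`-partite Turán graph on `n` vertices. -/
def turanNum (r n : ℕ) : ℕ := (SimpleGraph.turanGraph n r).edgeFinset.card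

/-- `c_F(G ∣ H⃗)`: the number of ways to orient the edges of `G` outside the induced
subgraph on `A` extending the orientation `H` to an `F`-free orientation of `G`. -/
def extFull (G : SimpleGraph V) (F : TournFamily) (A : Set V)
    (H : (G.induce A).Orient) : ℕ :=
  Nat.card {D : G.Orient // FreeOrient F D ∧
    ∀ (a b : V) (ha : a ∈ A) (hb : b ∈ A), (D.1 a b ↔ H.1 ⟨a, ha⟩ ⟨b, hb⟩)}

/-- `c_F(v, H⃗)`: the number of ways to orient the edges of `G` between `v` and `A`
so that the resulting orientation of the induced subgraph on `A ∪ {v}`, extending the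
orientation `H` of the induced subgraph on `A`, is `F`-free. -/
def extVert (G : SimpleGraph V) (F : TournFamily) (A : Set V) (v : V)
    (H : (G.induce A).Orient) : ℕ :=
  Nat.card {D : (G.induce (insert v A)).Orient // FreeOrient F D ∧
    ∀ (a b : V) (ha : a ∈ A) (hb : b ∈ A),
      (D.1 ⟨a, Set.mem_insert_of_mem v ha⟩ ⟨b, Set.mem_insert_of_mem v hb⟩ ↔
        H.1 ⟨a, ha⟩ ⟨b, hb⟩)}

/-- `G` is `F`-extremal: it has the maximum number of `F`-free orientations among all
graphs on its (`n`-element) vertex set. -/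
def IsExtremal {n : ℕ} (G : SimpleGraph (Fin n)) (F : TournFamily) : Prop :=
  ∀ G' : SimpleGraph (Fin n), numOrient G' F ≤ numOrient G F

/-!
Let `S` be independent and `c_x(H)` the number of `F`-free extensions of an orientation `H` of
`G - S` to `x ∈ S`. Every clique of `G` meets `S` in at most one vertex, so the extensions to
different vertices of `S` can be chosen independently and `D(G, F) = ∑_H ∏_{x ∈ S} c_x(H)`.
Replacing every vertex of `S` by a copy of one fixed `x` gives a graph with `∑_H c_x(H) ^ |S|`
`F`-free orientations. Extremality bounds each of these sums, hence also their average over `x`,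
by `∑_H ∏_x c_x(H)`, while AM-GM for every `H` gives the reverse inequality. So AM-GM is an
equality for every `H`, and `c_x(H)` does not depend on `x`.
-/

variable {W : Type*} {G : SimpleGraph V} {G' : SimpleGraph W}

section Comap

/-- The pullback of an orientation along an embedding of graphs. -/
def comapOrient (e : G' ↪g G) (D : G.Orient) : G'.Orient :=
  ⟨fun a b => D.1 (e a) (e b), fun _ _ h => e.map_adj_iff.1 (D.2.1 _ _ h),
    fun _ _ h => D.2.2 _ _ (e.map_adj_iff.2 h)⟩

/-- The orientation of the induced subgraph on `s` inherited from an orientation of `G`. -/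
abbrev restrictOrient (s : Set V) (D : G.Orient) : (G.induce s).Orient :=
  comapOrient (SimpleGraph.Embedding.induce s) D

/-- Pulling back along an isomorphism of graphs, as a bijection between orientations. -/
def comapOrientEquiv (e : G' ≃g G) : G.Orient ≃ G'.Orient where
  toFun := comapOrient e.toEmbedding
  invFun := comapOrient e.symm.toEmbedding
  left_inv D := by simp [comapOrient]
  right_inv D := by simp [comapOrient]

lemma orient_ext {D D' : G.Orient} (h : ∀ a b, G.Adj a b → (D.1 a b ↔ D'.1 a b)) : D = D' := by
  refine Subtype.ext (funext₂ fun a b => propext ?_)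
  exact ⟨fun hD => (h a b (D.2.1 a b hD)).1 hD, fun hD' => (h a b (D'.2.1 a b hD')).2 hD'⟩

lemma comapOrient_eq_iff {e : G' ↪g G} {D : G.Orient} {H : G'.Orient} :
    comapOrient e D = H ↔ ∀ a b, D.1 (e a) (e b) ↔ H.1 a b := by
  simp only [Subtype.ext_iff, funext_iff, comapOrient, eq_iff_iff]

lemma ContainsCopy.of_comap {e : G' ↪g G} {D : G.Orient} {k : ℕ}
    {T : (⊤ : SimpleGraph (Fin k)).Orient} :
    ContainsCopy (comapOrient e D) T → ContainsCopy D T := by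
  rintro ⟨φ, hinj, hφ⟩
  exact ⟨e ∘ φ, e.injective.comp hinj, hφ⟩

lemma FreeOrient.comap {F : TournFamily} {D : G.Orient} (hD : FreeOrient F D) (e : G' ↪g G) :
    FreeOrient F (comapOrient e D) :=
  fun k T hT hcopy => hD k T hT hcopy.of_comap

lemma freeOrient_comapOrientEquiv {F : TournFamily} (e : G' ≃g G) {D : G.Orient} :
    FreeOrient F (comapOrientEquiv e D) ↔ FreeOrient F D := by
  refine ⟨fun h => ?_, fun h => h.comap e.toEmbedding⟩
  rw [← (comapOrientEquiv e).symm_apply_apply D]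
  exact h.comap e.symm.toEmbedding

end Comap

section EdgeCover

variable {ι : Type*} {U : ι → Set V}

lemma orient_eq_of_restrictOrient_eq (hU : ∀ a b, G.Adj a b → ∃ i, a ∈ U i ∧ b ∈ U i)
    {D D' : G.Orient}
    (h : ∀ i, restrictOrient (U i) D = restrictOrient (U i) D') : D = D' := by
  refine orient_ext fun a b hab => ?_
  obtain ⟨i, ha, hb⟩ := hU a b hab
  exact comapOrient_eq_iff.1 (h i) ⟨a, ha⟩ ⟨b, hb⟩

lemma exists_restrictOrient_eq (hU : ∀ a b, G.Adj a b → ∃ i, a ∈ U i ∧ b ∈ U i)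
    (E : ∀ i, (G.induce (U i)).Orient)
    (hE : ∀ i j a b (hai : a ∈ U i) (hbi : b ∈ U i) (haj : a ∈ U j) (hbj : b ∈ U j),
      (E i).1 ⟨a, hai⟩ ⟨b, hbi⟩ → (E j).1 ⟨a, haj⟩ ⟨b, hbj⟩) :
    ∃ D : G.Orient, ∀ i, restrictOrient (U i) D = E i := by
  let R (a b : V) : Prop := ∃ (i : ι) (ha : a ∈ U i) (hb : b ∈ U i), (E i).1 ⟨a, ha⟩ ⟨b, hb⟩
  have R_iff {i : ι} {a b : V} (ha : a ∈ U i) (hb : b ∈ U i) :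
      R a b ↔ (E i).1 ⟨a, ha⟩ ⟨b, hb⟩ :=
    ⟨fun ⟨j, haj, hbj, h⟩ => hE j i a b haj hbj ha hb h, fun h => ⟨i, ha, hb, h⟩⟩
  have R_adj (a b : V) : R a b → G.Adj a b := fun ⟨i, _, _, h⟩ => (E i).2.1 _ _ h
  have R_asymm (a b : V) (hab : G.Adj a b) : R a b ↔ ¬ R b a := by
    obtain ⟨i, ha, hb⟩ := hU a b hab
    rw [R_iff ha hb, R_iff hb ha]
    exact (E i).2.2 _ _ hab
  exact ⟨⟨R, R_adj, R_asymm⟩, fun i => comapOrient_eq_iff.2 fun a b => R_iff a.2 b.2⟩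

end EdgeCover

section CliqueCover

variable {ι : Type*} {U : ι → Set V}

/-- A family of vertex sets such that every clique of `G` lies in one of them. Since the
copies of tournaments in an orientation of `G` live on cliques, `F`-freeness can be tested on the
members of such a family. -/
def IsCliqueCover (G : SimpleGraph V) (U : ι → Set V) : Prop :=
  ∀ C : Set V, G.IsClique C → ∃ i, C ⊆ U i

lemma IsCliqueCover.exists_mem_of_adj (hU : IsCliqueCover G U) (a b : V) (hab : G.Adj a b) :
    ∃ i, a ∈ U i ∧ b ∈ U i := by
  simpa only [Set.pair_subset_iff] using hU {a, b} (SimpleGraph.isClique_pair.2 fun _ => hab)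

lemma isClique_range_of_map_tournament (D : G.Orient) {k : ℕ}
    {T : (⊤ : SimpleGraph (Fin k)).Orient} {φ : Fin k → V}
    (hφ : ∀ i j, T.1 i j → D.1 (φ i) (φ j)) : G.IsClique (Set.range φ) := by
  rintro _ ⟨i, rfl⟩ _ ⟨j, rfl⟩ hij
  by_cases hT : T.1 i j
  · exact D.2.1 _ _ (hφ i j hT)
  · exact (D.2.1 _ _ (hφ j i ((T.2.2 j i (ne_of_apply_ne φ hij).symm).2 hT))).symm

lemma IsCliqueCover.freeOrient_iff (hU : IsCliqueCover G U) {F : TournFamily} {D : G.Orient} :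
    FreeOrient F D ↔ ∀ i, FreeOrient F (restrictOrient (U i) D) := by
  refine ⟨fun h i => h.comap _, ?_⟩
  rintro h k T hT ⟨φ, hinj, hφ⟩
  obtain ⟨i, hi⟩ := hU _ (isClique_range_of_map_tournament D hφ)
  exact h i k T hT ⟨Set.codRestrict φ (U i) (Set.range_subset_iff.1 hi),
    hinj.codRestrict _, hφ⟩

end CliqueCover

section IndepSet

variable {S : Set V}

lemma isCliqueCover_insert_compl (hS : G.IsIndepSet S) (hne : S.Nonempty) :
    IsCliqueCover G fun x : S => insert (x : V) Sᶜ := by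
  intro C hC
  by_cases hCS : C ⊆ Sᶜ
  · exact ⟨⟨hne.some, hne.some_mem⟩, hCS.trans (Set.subset_insert _ _)⟩
  · obtain ⟨x, hxC, hxS⟩ := Set.not_subset.1 hCS
    refine ⟨⟨x, not_not.1 hxS⟩, fun y hy => or_iff_not_imp_left.2 fun hyx hyS => ?_⟩
    exact hS hyS (not_not.1 hxS) hyx (hC hy hxC hyx)

lemma extFull_eq_card_restrictOrient (F : TournFamily) (A : Set V) (H : (G.induce A).Orient) :
    extFull G F A H = Nat.card {D : G.Orient // FreeOrient F D ∧ restrictOrient A D = H} := by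
  simp only [extFull, comapOrient_eq_iff, Subtype.forall]
  exact Nat.card_congr (Equiv.subtypeEquivRight fun D => and_congr_right fun _ =>
    ⟨fun h a ha b hb => h a b ha hb, fun h a b ha hb => h a ha b hb⟩)

lemma extVert_eq_card_comapOrient (F : TournFamily) (A : Set V) (v : V) (H : (G.induce A).Orient) :
    extVert G F A v H = Nat.card {D : (G.induce (insert v A)).Orient //
      FreeOrient F D ∧ comapOrient (G.induceHomOfLE (Set.subset_insert v A)) D = H} := by
  simp only [extVert, comapOrient_eq_iff, Subtype.forall]
  exact Nat.card_congr (Equiv.subtypeEquivRight fun D => and_congr_right fun _ =>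
    ⟨fun h a ha b hb => h a b ha hb, fun h a b ha hb => h a ha b hb⟩)

lemma numOrient_eq_sum_extFull [Finite V] (G : SimpleGraph V) (F : TournFamily) (A : Set V)
    [Fintype (G.induce A).Orient] : numOrient G F = ∑ H : (G.induce A).Orient, extFull G F A H := by
  rw [numOrient, ← Nat.card_congr (Equiv.sigmaFiberEquiv fun D : {D : G.Orient //
    FreeOrient F D} => restrictOrient A D.1), Nat.card_sigma]
  simp only [extFull_eq_card_restrictOrient]
  exact Finset.sum_congr rfl fun H _ =>
    Nat.card_congr (Equiv.subtypeSubtypeEquivSubtypeInter _ fun D => restrictOrient A D = H)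

lemma exists_restrictOrient_insert_eq (hS : G.IsIndepSet S) (hne : S.Nonempty)
    {H : (G.induce Sᶜ).Orient} (E : ∀ x : S, (G.induce (insert (x : V) Sᶜ)).Orient)
    (hE : ∀ x, comapOrient (G.induceHomOfLE (Set.subset_insert _ _)) (E x) = H) :
    ∃ D : G.Orient, restrictOrient Sᶜ D = H ∧
      ∀ x : S, restrictOrient (insert (x : V) Sᶜ) D = E x := by
  have mem_compl {x y : S} (hxy : x ≠ y) {a : V} (hax : a ∈ insert (x : V) Sᶜ)
      (hay : a ∈ insert (y : V) Sᶜ) : a ∈ Sᶜ := by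
    rcases hax with rfl | ha
    · exact hay.resolve_left fun h => hxy (Subtype.ext h)
    · exact ha
  have agree (x y : S) (a b : V) (hax : a ∈ insert (x : V) Sᶜ) (hbx : b ∈ insert (x : V) Sᶜ)
      (hay : a ∈ insert (y : V) Sᶜ) (hby : b ∈ insert (y : V) Sᶜ)
      (hab : (E x).1 ⟨a, hax⟩ ⟨b, hbx⟩) : (E y).1 ⟨a, hay⟩ ⟨b, hby⟩ := by
    obtain rfl | hxy := eq_or_ne x y
    · exact hab
    · have ha := mem_compl hxy hax hay
      have hb := mem_compl hxy hbx hby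
      have hH : H.1 ⟨a, ha⟩ ⟨b, hb⟩ := (comapOrient_eq_iff.1 (hE x) ⟨a, ha⟩ ⟨b, hb⟩).1 hab
      exact (comapOrient_eq_iff.1 (hE y) ⟨a, ha⟩ ⟨b, hb⟩).2 hH
  obtain ⟨D, hD⟩ :=
    exists_restrictOrient_eq (isCliqueCover_insert_compl hS hne).exists_mem_of_adj E agree
  obtain ⟨x⟩ := hne.to_subtype
  have hDH : restrictOrient Sᶜ D = H := by
    rw [← hE x, ← hD x]
    rfl
  exact ⟨D, hDH, hD⟩

lemma extFull_compl_eq_prod_extVert [Fintype S] (F : TournFamily) (hS : G.IsIndepSet S)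
    (hne : S.Nonempty) (H : (G.induce Sᶜ).Orient) :
    extFull G F Sᶜ H = ∏ x : S, extVert G F Sᶜ x H := by
  have hU := isCliqueCover_insert_compl hS hne
  simp only [extFull_eq_card_restrictOrient, extVert_eq_card_comapOrient, ← Nat.card_pi]
  refine Nat.card_congr (Equiv.ofBijective
    (fun D x => ⟨restrictOrient (insert (x : V) Sᶜ) D.1, D.2.1.comap _, D.2.2⟩) ⟨?_, ?_⟩)
  · exact fun D D' h => Subtype.ext (orient_eq_of_restrictOrient_eq hU.exists_mem_of_adj
      fun x => congrArg Subtype.val (congrFun h x))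
  · intro E
    obtain ⟨D, hDH, hDE⟩ := exists_restrictOrient_insert_eq hS hne (fun x => (E x).1)
      fun x => (E x).2.2
    have hD : FreeOrient F D := hU.freeOrient_iff.2 fun x => hDE x ▸ (E x).2.1
    exact ⟨⟨D, hD, hDH⟩, funext fun x => Subtype.ext (hDE x)⟩

lemma numOrient_eq_sum_prod_extVert [Finite V] [Fintype S] [Fintype (G.induce Sᶜ).Orient]
    (F : TournFamily) (hS : G.IsIndepSet S) (hne : S.Nonempty) :
    numOrient G F = ∑ H : (G.induce Sᶜ).Orient, ∏ x : S, extVert G F Sᶜ x H := by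
  simp only [numOrient_eq_sum_extFull G F Sᶜ, extFull_compl_eq_prod_extVert F hS hne]

end IndepSet

section Blowup

/-- A map restricting to a bijection from `B` to `A` identifies the subgraph of the blow-up
`G.comap g` induced on `B` with the subgraph of `G` induced on `A`. -/
def induceComapIso (G : SimpleGraph V) {g : W → V} {B : Set W} {A : Set V}
    (h : Set.BijOn g B A) : (G.comap g).induce B ≃g G.induce A :=
  ⟨h.equiv, Iff.rfl⟩

lemma extVert_comap (F : TournFamily) {g : W → V} {B : Set W} {A : Set V} (h : Set.BijOn g B A)
    {x : W} (hx : g x ∉ A) (H : (G.induce A).Orient) :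
    extVert (G.comap g) F B x (comapOrientEquiv (induceComapIso G h) H) =
      extVert G F A (g x) H := by
  simp only [extVert_eq_card_comapOrient]
  refine (Nat.card_congr ((comapOrientEquiv (induceComapIso G (h.insert hx))).subtypeEquiv
    fun D => and_congr (freeOrient_comapOrientEquiv _).symm ?_)).symm
  exact (comapOrientEquiv (induceComapIso G h)).injective.eq_iff.symm

/-- The graph obtained from `G` by replacing every vertex of `S` with a copy of `u`. -/
def cloneOn (G : SimpleGraph V) (S : Set V) (u : V) : SimpleGraph V :=
  G.comap (S.piecewise (fun _ => u) id)

lemma numOrient_cloneOn [Finite V] (F : TournFamily) {S : Set V} [Fintype S]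
    [Fintype (G.induce Sᶜ).Orient] {u : V} (hu : u ∈ S) :
    numOrient (cloneOn G S u) F =
      ∑ H : (G.induce Sᶜ).Orient, extVert G F Sᶜ u H ^ Fintype.card S := by
  let g := S.piecewise (fun _ => u) id
  have hgS (x : S) : g x = u := S.piecewise_eq_of_mem _ _ x.2
  have hg : Set.BijOn g Sᶜ Sᶜ := (S.piecewise_eqOn_compl _ _).bijOn_iff.2 (Set.bijOn_id _)
  have hindep : (G.comap g).IsIndepSet S := fun x hx y hy _ hxy => by
    rw [SimpleGraph.comap_adj, hgS ⟨x, hx⟩, hgS ⟨y, hy⟩] at hxy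
    exact G.irrefl hxy
  have : Fintype ((G.comap g).induce Sᶜ).Orient := Fintype.ofFinite _
  calc numOrient (G.comap g) F
      = ∑ H : ((G.comap g).induce Sᶜ).Orient, ∏ x : S, extVert (G.comap g) F Sᶜ x H :=
        numOrient_eq_sum_prod_extVert F hindep ⟨u, hu⟩
    _ = ∑ H : (G.induce Sᶜ).Orient, ∏ x : S, extVert G F Sᶜ (g x) H := by
        rw [← (comapOrientEquiv (induceComapIso G hg)).sum_comp]
        exact Finset.sum_congr rfl fun H _ => Finset.prod_congr rfl fun x _ =>
          extVert_comap F hg (by rw [hgS]; exact not_not.2 hu) H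
    _ = ∑ H : (G.induce Sᶜ).Orient, extVert G F Sᶜ u H ^ Fintype.card S := by
        simp only [hgS, Finset.prod_const, Finset.card_univ]

end Blowup

section AMGM

variable {ι : Type*} [Fintype ι] {c : ι → ℝ}

lemma prod_pow_card_rpow_inv_card (hc : ∀ i, 0 ≤ c i) :
    ∏ i, (c i ^ Fintype.card ι) ^ (Fintype.card ι : ℝ)⁻¹ = ∏ i, c i :=
  Finset.prod_congr rfl fun i _ =>
    have : Nonempty ι := ⟨i⟩
    Real.pow_rpow_inv_natCast (hc i) Fintype.card_ne_zero

lemma card_mul_prod_le_sum_pow_card (hc : ∀ i, 0 ≤ c i) :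
    Fintype.card ι * ∏ i, c i ≤ ∑ i, c i ^ Fintype.card ι := by
  cases isEmpty_or_nonempty ι
  · simp
  · have amgm := Real.geom_mean_le_arith_mean_weighted Finset.univ
      (fun _ => (Fintype.card ι : ℝ)⁻¹) (fun i => c i ^ Fintype.card ι)
      (fun _ _ => by positivity) (by simp) fun i _ => pow_nonneg (hc i) _
    rwa [prod_pow_card_rpow_inv_card hc, ← Finset.mul_sum, le_inv_mul_iff₀ (by positivity)] at amgm

lemma eq_of_card_mul_prod_eq_sum_pow_card (hc : ∀ i, 0 ≤ c i)
    (h : Fintype.card ι * ∏ i, c i = ∑ i, c i ^ Fintype.card ι) (i j : ι) : c i = c j := by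
  have : Nonempty ι := ⟨i⟩
  have amgm_eq := Real.geom_mean_eq_arith_mean_weighted_iff_of_pos Finset.univ
    (fun _ => (Fintype.card ι : ℝ)⁻¹) (fun i => c i ^ Fintype.card ι)
    (fun _ _ => by positivity) (by simp) fun i _ => pow_nonneg (hc i) _
  rw [prod_pow_card_rpow_inv_card hc, ← Finset.mul_sum,
    eq_inv_mul_iff_mul_eq₀ (by positivity)] at amgm_eq
  exact (pow_left_inj₀ (hc i) (hc j) Fintype.card_ne_zero).1
    (amgm_eq.1 h i (Finset.mem_univ i) j (Finset.mem_univ j))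

lemma eq_of_sum_pow_card_le_sum_prod {κ : Type*} [Fintype κ] {c : ι → κ → ℝ}
    (hc : ∀ i k, 0 ≤ c i k) (hle : ∀ i, ∑ k, c i k ^ Fintype.card ι ≤ ∑ k, ∏ j, c j k) (i j : ι) :
    c i = c j := by
  have amgm (k : κ) : Fintype.card ι * ∏ i, c i k ≤ ∑ i, c i k ^ Fintype.card ι :=
    card_mul_prod_le_sum_pow_card fun i => hc i k
  have hsum : ∑ k, ∑ i, c i k ^ Fintype.card ι ≤ ∑ k, Fintype.card ι * ∏ i, c i k := by
    rw [Finset.sum_comm, ← Finset.mul_sum, ← nsmul_eq_mul]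
    exact Finset.sum_le_card_nsmul _ _ _ fun i _ => hle i
  have amgm_eq := (Finset.sum_eq_sum_iff_of_le fun k _ => amgm k).1
    (le_antisymm (Finset.sum_le_sum fun k _ => amgm k) hsum)
  exact funext fun k => eq_of_card_mul_prod_eq_sum_pow_card (fun i => hc i k)
    (amgm_eq k (Finset.mem_univ k)) i j

end AMGM

theorem extVert_eq_of_isExtremal_general [Finite V] {F : TournFamily}
    (hG : ∀ G' : SimpleGraph V, numOrient G' F ≤ numOrient G F) {S : Set V}
    (hS : G.IsIndepSet S) {u w : V} (hu : u ∈ S) (hw : w ∈ S) (H : (G.induce Sᶜ).Orient) :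
    extVert G F Sᶜ u H = extVert G F Sᶜ w H := by
  have : Fintype S := Fintype.ofFinite S
  have : Fintype (G.induce Sᶜ).Orient := Fintype.ofFinite _
  have clone_le (x : S) : ∑ H : (G.induce Sᶜ).Orient, extVert G F Sᶜ x H ^ Fintype.card S ≤
      ∑ H : (G.induce Sᶜ).Orient, ∏ y : S, extVert G F Sᶜ y H := by
    rw [← numOrient_cloneOn F x.2, ← numOrient_eq_sum_prod_extVert F hS ⟨u, hu⟩]
    exact hG _
  have vectors_eq := eq_of_sum_pow_card_le_sum_prod
    (c := fun (x : S) H => (extVert G F Sᶜ x H : ℝ)) (fun _ _ => Nat.cast_nonneg _)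
    (fun x => by exact_mod_cast clone_le x) ⟨u, hu⟩ ⟨w, hw⟩
  exact_mod_cast congrFun vectors_eq H

/-- If `G` is `F`-extremal, `S` is a nonempty independent set of `G` and `H = G - S`,
then for any `u, w ∈ S` the vectors `u⃗_{H,F}` and `w⃗_{H,F}` coincide, i.e.
`c_F(u, H⃗) = c_F(w, H⃗)` for every `F`-free orientation `H⃗` of `H`. -/
theorem extVert_eq_of_isExtremal {n : ℕ} (G : SimpleGraph (Fin n)) (F : TournFamily)
    (hG : IsExtremal G F) (S : Finset (Fin n)) (hSne : S.Nonempty)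
    (hS : (↑S : Set (Fin n)).Pairwise fun u v => ¬ G.Adj u v)
    (u w : Fin n) (hu : u ∈ S) (hw : w ∈ S)
    (H : (G.induce (↑S : Set (Fin n))ᶜ).Orient) (hH : FreeOrient F H) :
    extVert G F (↑S : Set (Fin n))ᶜ u H = extVert G F (↑S : Set (Fin n))ᶜ w H :=
  extVert_eq_of_isExtremal_general hG hS (Finset.mem_coe.2 hu) (Finset.mem_coe.2 hw) H
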